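/- Let B be a left Noetherian ring and let A be a ring with no zero divisors containing B as a subring, such that A is finitely generated as a left B-module (with B acting by left multiplication). Then every nonzero left ideal I of A has nonzero intersection with B, i.e. there exists x ∈ I ∩ B with x ≠ 0. -/

import Mathlib

/-!
Right multiplication by an element `a ≠ 0` of `I` is an injective `B`-linear map `A → I`. If
`I ∩ B = 0`, then `(b, x) ↦ b + x * a` embeds `B × A` into `A`; iterating this embedding yields
infinitely many `B`-linearly independent elements (the powers of `a`), which a finitely generated
module over a ring with the strong rank condition does not have.
-/

theorem not_injective_linearMap_prod_self {R M : Type*} [Semiring R] [StrongRankCondition R]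
    [AddCommMonoid M] [Module R M] [Module.Finite R M] (f : R × M →ₗ[R] M) :
    ¬ Function.Injective f := by
  intro hf
  obtain ⟨g, hg⟩ := LinearMap.exists_finsupp_nat_of_prod_injective hf
  have hli : LinearIndependent R (g ∘ Finsupp.basisSingleOne (ι := ℕ)) :=
    Finsupp.basisSingleOne.linearIndependent.map_injOn g hg.injOn
  exact Infinite.not_finite hli.finite

theorem exists_ne_zero_smul_mem_range_of_injective {R M : Type*} [Ring R] [StrongRankCondition R]
    [AddCommGroup M] [Module R M] [Module.Finite R M] {f : M →ₗ[R] M} (hf : Function.Injective f)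
    (m : M) : ∃ r : R, r ≠ 0 ∧ r • m ∈ LinearMap.range f := by
  by_contra! h
  refine not_injective_linearMap_prod_self ((LinearMap.toSpanSingleton R M m).coprod f) ?_
  rw [injective_iff_map_eq_zero]
  rintro ⟨r, x⟩ hrx
  have hsum : r • m + f x = 0 := by simpa using hrx
  have hr : r = 0 := by
    by_contra hr
    have hrm : f (-x) = r • m := by rw [map_neg, ← eq_neg_of_add_eq_zero_left hsum]
    exact h r hr ⟨-x, hrm⟩
  have hx : x = 0 := hf (by simpa [hr] using hsum)
  rw [hr, hx, Prod.mk_zero_zero]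

theorem statement2_general {R A : Type*} [Ring R] [StrongRankCondition R] [Ring A] [Module R A]
    [IsScalarTower R A A] [Module.Finite R A] {I : Ideal A} {a : A} (haI : a ∈ I)
    (ha : IsRightRegular a) (c : A) : ∃ r : R, r ≠ 0 ∧ r • c ∈ I := by
  obtain ⟨r, hr, x, hx⟩ :=
    exists_ne_zero_smul_mem_range_of_injective (f := LinearMap.mulRight R a) ha c
  exact ⟨r, hr, hx ▸ I.mul_mem_left x haI⟩

/-- Let `B` be a left Noetherian ring and `A` a ring with no zero divisors
containing `B` as a subring, such that `A` is finitely generated as a left `B`-module (with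
`B` acting by left multiplication).  Then every nonzero left ideal `I` of `A` has nonzero
intersection with `B`.  (Here `Ideal A = Submodule A A` is a left ideal of the possibly
noncommutative ring `A`.) -/
theorem statement2 {A : Type*} [Ring A] [NoZeroDivisors A] (B : Subring A)
    [IsNoetherianRing B] [Module.Finite B A] (I : Ideal A) (hI : I ≠ ⊥) :
    ∃ x : A, x ∈ I ∧ x ∈ B ∧ x ≠ 0 := by
  obtain ⟨a, haI, ha⟩ := Submodule.exists_mem_ne_zero_of_ne_bot hI
  have : Nontrivial A := ⟨a, 0, ha⟩
  obtain ⟨b, hb, hbI⟩ := statement2_general (R := B) haI (IsRegular.of_ne_zero ha).right 1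
  exact ⟨b, by simpa [Subring.smul_def] using hbI, b.2, Subtype.coe_ne_coe.mpr hb⟩
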